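/- For all integers k ≥ 2 and m ≥ 1, setting n = k·m, there exists a probability measure μ on ℝⁿ such that μ-almost surely the coordinates b_1, …, b_n satisfy b_i ∈ [0, k/n] for all i and b_1 + ⋯ + b_n = 1, and for each i and every t ∈ [0, k/n], μ{b : b_i ≤ t} = ((n/k)·t)^{1/(k−1)}. -/

import Mathlib

open MeasureTheory
open scoped ENNReal

open ProbabilityTheory

/-!
If `X` and `Y` are independent Gamma variables with a common rate and shapes `a` and `b`, the change
of variables `(x, y) ↦ (x + y, x / (x + y))` turns their joint density into the product of a
Gamma density of shape `a + b` and a Beta density with parameters `a` and `b`. Hence dividing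
independent Gamma variables by their total gives a random point of the simplex (the Dirichlet law)
whose `j`-th coordinate is Beta distributed with parameters `a j` and `∑ i ≠ j, a i`. For `k`
variables of shape `1 / (k - 1)` the second parameter is `1`, and the Beta distribution function
degenerates to `t ^ (1 / (k - 1))`. Repeating each coordinate `m` times with weight `1 / m` keeps
the total equal to `1` and rescales the marginals.
-/

section GammaBeta

variable {a b r : ℝ}

theorem lintegral_eq_abs_mul_lintegral_comp_mul_left {s : ℝ} (hs : s ≠ 0)
    (f : ℝ → ℝ≥0∞) :
    ∫⁻ x, f x = ENNReal.ofReal |s| * ∫⁻ u, f (s * u) := by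
  conv_lhs => rw [← Real.smul_map_volume_mul_left hs]
  rw [lintegral_smul_measure, smul_eq_mul]
  exact congrArg _ (lintegral_map_equiv f (MeasurableEquiv.mulLeft₀ s hs))

theorem lintegral_prod_eq_lintegral_sum_ratio {f : ℝ × ℝ → ℝ≥0∞} (hf : Measurable f) :
    ∫⁻ p, f p = ∫⁻ q : ℝ × ℝ, ENNReal.ofReal |q.1| * f (q.1 * q.2, q.1 * (1 - q.2)) := by
  have hne : ∀ᵐ s : ℝ, s ≠ 0 := by simp [ae_iff]
  calc ∫⁻ p, f p
      = ∫⁻ x, ∫⁻ y, f (x, y) := lintegral_prod _ hf.aemeasurable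
    _ = ∫⁻ x, ∫⁻ s, f (x, s - x) := by
        congr with x
        exact (lintegral_sub_right_eq_self (fun y => f (x, y)) x).symm
    _ = ∫⁻ s, ∫⁻ x, f (x, s - x) :=
        lintegral_lintegral_swap (f := fun x s => f (x, s - x)) (by fun_prop)
    _ = ∫⁻ s, ∫⁻ u, ENNReal.ofReal |s| * f (s * u, s * (1 - u)) := by
        refine lintegral_congr_ae ?_
        filter_upwards [hne] with s hs
        rw [lintegral_eq_abs_mul_lintegral_comp_mul_left hs,
          lintegral_const_mul _ (by fun_prop)]
        simp only [mul_sub, mul_one]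
    _ = ∫⁻ q : ℝ × ℝ, ENNReal.ofReal |q.1| * f (q.1 * q.2, q.1 * (1 - q.2)) :=
        (lintegral_prod (fun q : ℝ × ℝ => ENNReal.ofReal |q.1| * f (q.1 * q.2, q.1 * (1 - q.2)))
          (by fun_prop)).symm

@[fun_prop]
theorem measurable_gammaPDF (a r : ℝ) : Measurable (gammaPDF a r) := by
  unfold gammaPDF
  fun_prop

@[fun_prop]
theorem measurable_betaPDF (a b : ℝ) : Measurable (betaPDF a b) := by
  unfold betaPDF
  fun_prop

theorem ae_pos_gammaMeasure (a r : ℝ) : ∀ᵐ x ∂gammaMeasure a r, 0 < x := by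
  have hne : ∀ᵐ x : ℝ, x ≠ 0 := by simp [ae_iff]
  rw [gammaMeasure, ae_withDensity_iff (measurable_gammaPDF a r)]
  filter_upwards [hne] with x hx hpdf
  exact (not_lt.1 (mt gammaPDF_of_neg hpdf)).lt_of_ne' hx

theorem mul_gammaPDFReal_mul_gammaPDFReal (ha : 0 < a) (hb : 0 < b) (hr : 0 < r) {s u : ℝ}
    (hs : 0 < s) (hu₀ : 0 < u) (hu₁ : u < 1) :
    s * (gammaPDFReal a r (s * u) * gammaPDFReal b r (s * (1 - u))) =
      gammaPDFReal (a + b) r s * betaPDFReal a b u := by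
  have hv : 0 < 1 - u := sub_pos.2 hu₁
  have hs_pow : s ^ (a + b - 1) = s * (s ^ (a - 1) * s ^ (b - 1)) := by
    rw [show a + b - 1 = 1 + ((a - 1) + (b - 1)) by ring, Real.rpow_add hs, Real.rpow_add hs,
      Real.rpow_one]
  have hexp : Real.exp (-(r * s)) =
      Real.exp (-(r * (s * u))) * Real.exp (-(r * (s * (1 - u)))) := by
    rw [← Real.exp_add]
    congr 1
    ring
  have hΓ : Real.Gamma (a + b) ≠ 0 := (Real.Gamma_pos_of_pos (add_pos ha hb)).ne'
  rw [gammaPDFReal, gammaPDFReal, gammaPDFReal, betaPDFReal, if_pos (by positivity),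
    if_pos (by positivity), if_pos hs.le, if_pos ⟨hu₀, hu₁⟩, Real.mul_rpow hs.le hu₀.le,
    Real.mul_rpow hs.le hv.le, hs_pow, hexp, Real.rpow_add hr, beta]
  field_simp

theorem abs_mul_gammaPDF_mul_gammaPDF (ha : 0 < a) (hb : 0 < b) (hr : 0 < r) {s u : ℝ}
    (hs : s ≠ 0) (hu₀ : u ≠ 0) (hu₁ : u ≠ 1) :
    ENNReal.ofReal |s| * (gammaPDF a r (s * u) * gammaPDF b r (s * (1 - u))) =
      gammaPDF (a + b) r s * betaPDF a b u := by
  by_cases hmem : 0 < s ∧ 0 < u ∧ u < 1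
  · obtain ⟨hs, hu₀, hu₁⟩ := hmem
    simp only [gammaPDF, betaPDF, abs_of_pos hs]
    rw [← ENNReal.ofReal_mul (gammaPDFReal_nonneg ha hr _), ← ENNReal.ofReal_mul hs.le,
      ← ENNReal.ofReal_mul (gammaPDFReal_nonneg (add_pos ha hb) hr _),
      mul_gammaPDFReal_mul_gammaPDFReal ha hb hr hs hu₀ hu₁]
  · have hleft : s * u < 0 ∨ s * (1 - u) < 0 := by
      by_contra! h
      rcases hs.lt_or_gt with hs | hs
      · nlinarith
      · exact hmem ⟨hs, (nonneg_of_mul_nonneg_right h.1 hs).lt_of_ne' hu₀,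
          (sub_nonneg.1 (nonneg_of_mul_nonneg_right h.2 hs)).lt_of_ne hu₁⟩
    have hright : s < 0 ∨ u ≤ 0 ∨ 1 ≤ u := by
      by_contra! h
      exact hmem ⟨h.1.lt_of_ne' hs, h.2⟩
    trans 0
    · rcases hleft with h | h <;> simp [gammaPDF_of_neg h]
    · rcases hright with h | h | h
      · simp [gammaPDF_of_neg h]
      · simp [betaPDF_eq_zero_of_nonpos h]
      · simp [betaPDF_eq_zero_of_one_le h]

theorem hasLaw_sum_ratio_gammaMeasure (ha : 0 < a) (hb : 0 < b) (hr : 0 < r) :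
    HasLaw (fun p : ℝ × ℝ => (p.1 + p.2, p.1 / (p.1 + p.2)))
      ((gammaMeasure (a + b) r).prod (betaMeasure a b))
      ((gammaMeasure a r).prod (gammaMeasure b r)) where
  map_eq := by
    have hne : ∀ᵐ q : ℝ × ℝ, q.1 ≠ 0 ∧ q.2 ≠ 0 ∧ q.2 ≠ 1 := by
      have h (c : ℝ) : ∀ᵐ x : ℝ, x ≠ c := by simp [ae_iff]
      filter_upwards [Measure.quasiMeasurePreserving_fst.ae (h 0),
        Measure.quasiMeasurePreserving_snd.ae (h 0),
        Measure.quasiMeasurePreserving_snd.ae (h 1)] with q h₁ h₂ h₃ using ⟨h₁, h₂, h₃⟩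
    refine Measure.ext_of_lintegral _ fun f hf => ?_
    simp only [gammaMeasure, betaMeasure]
    rw [prod_withDensity (by fun_prop) (by fun_prop), prod_withDensity (by fun_prop) (by fun_prop),
      lintegral_map hf (by fun_prop),
      lintegral_withDensity_eq_lintegral_mul _ (by fun_prop) (by fun_prop),
      lintegral_withDensity_eq_lintegral_mul _ (by fun_prop) hf, ← Measure.volume_eq_prod,
      lintegral_prod_eq_lintegral_sum_ratio (by fun_prop)]
    refine lintegral_congr_ae ?_
    filter_upwards [hne] with ⟨s, u⟩ ⟨hs, hu₀, hu₁⟩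
    have hsum : s * u + s * (1 - u) = s := by ring
    simp only [Pi.mul_apply, hsum, mul_div_cancel_left₀ u hs]
    rw [← mul_assoc, abs_mul_gammaPDF_mul_gammaPDF ha hb hr hs hu₀ hu₁]

theorem betaMeasure_one_right_Iic (ha : 0 < a) {t : ℝ} (ht : t ∈ Set.Icc 0 1) :
    betaMeasure a 1 (Set.Iic t) = ENNReal.ofReal (t ^ a) := by
  have hbeta : 1 / beta a 1 = a := by
    rw [beta, Real.Gamma_add_one ha.ne', Real.Gamma_one]
    have := (Real.Gamma_pos_of_pos ha).ne'
    field_simp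
  have hpdf (x : ℝ) (hx : x ∈ Set.Ioo 0 t) : betaPDF a 1 x = ENNReal.ofReal (a * x ^ (a - 1)) := by
    rw [betaPDF_of_pos_lt_one hx.1 (hx.2.trans_le ht.2), hbeta, sub_self, Real.rpow_zero, mul_one]
  have hint : IntegrableOn (fun x => a * x ^ (a - 1)) (Set.Ioc 0 t) :=
    ((intervalIntegrable_iff_integrableOn_Ioc_of_le ht.1).1
      (intervalIntegral.intervalIntegrable_rpow' (by linarith))).const_mul a
  have hnonneg : ∀ᵐ x ∂volume.restrict (Set.Ioc 0 t), 0 ≤ a * x ^ (a - 1) :=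
    ae_restrict_of_forall_mem measurableSet_Ioc fun x hx =>
      mul_nonneg ha.le (Real.rpow_nonneg hx.1.le _)
  calc betaMeasure a 1 (Set.Iic t)
      = ∫⁻ x in Set.Iic t, betaPDF a 1 x := withDensity_apply _ measurableSet_Iic
    _ = ∫⁻ x in Set.Ioc 0 t, betaPDF a 1 x := by
        rw [← Set.Iic_union_Ioc_eq_Iic ht.1, lintegral_union measurableSet_Ioc
            (Set.Iic_disjoint_Ioc le_rfl),
          setLIntegral_eq_zero measurableSet_Iic fun x hx => betaPDF_eq_zero_of_nonpos hx, zero_add]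
    _ = ∫⁻ x in Set.Ioc 0 t, ENNReal.ofReal (a * x ^ (a - 1)) := by
        rw [setLIntegral_congr Ioo_ae_eq_Ioc.symm, setLIntegral_congr Ioo_ae_eq_Ioc.symm]
        exact setLIntegral_congr_fun measurableSet_Ioo hpdf
    _ = ENNReal.ofReal (∫ x in (0)..t, a * x ^ (a - 1)) := by
        rw [intervalIntegral.integral_of_le ht.1, ofReal_integral_eq_lintegral_ofReal hint hnonneg]
    _ = ENNReal.ofReal (t ^ a) := by
        rw [intervalIntegral.integral_const_mul, integral_rpow (Or.inl (by linarith)),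
          sub_add_cancel, Real.zero_rpow ha.ne', sub_zero, mul_div_cancel₀ _ ha.ne']

end GammaBeta

section IndependentPair

variable {Ω : Type*} {mΩ : MeasurableSpace Ω} {P : Measure Ω} {Y Z : Ω → ℝ} {a b r : ℝ}

theorem hasLaw_sum_ratio_of_indepFun (ha : 0 < a) (hb : 0 < b) (hr : 0 < r)
    (hY : HasLaw Y (gammaMeasure a r) P) (hZ : HasLaw Z (gammaMeasure b r) P)
    (hYZ : IndepFun Y Z P) :
    HasLaw (fun ω => (Y ω + Z ω, Y ω / (Y ω + Z ω)))
      ((gammaMeasure (a + b) r).prod (betaMeasure a b)) P := by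
  have := isProbabilityMeasure_gammaMeasure ha hr
  have := hY.isProbabilityMeasure
  exact (hasLaw_sum_ratio_gammaMeasure ha hb hr).fun_comp (hYZ.hasLaw_prod hY hZ)

theorem hasLaw_add_gammaMeasure (ha : 0 < a) (hb : 0 < b) (hr : 0 < r)
    (hY : HasLaw Y (gammaMeasure a r) P) (hZ : HasLaw Z (gammaMeasure b r) P)
    (hYZ : IndepFun Y Z P) :
    HasLaw (Y + Z) (gammaMeasure (a + b) r) P := by
  have := isProbabilityMeasureBeta ha hb
  exact measurePreserving_fst.fun_comp_hasLaw (hasLaw_sum_ratio_of_indepFun ha hb hr hY hZ hYZ)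

theorem hasLaw_div_add_betaMeasure (ha : 0 < a) (hb : 0 < b) (hr : 0 < r)
    (hY : HasLaw Y (gammaMeasure a r) P) (hZ : HasLaw Z (gammaMeasure b r) P)
    (hYZ : IndepFun Y Z P) :
    HasLaw (fun ω => Y ω / (Y ω + Z ω)) (betaMeasure a b) P := by
  have := isProbabilityMeasure_gammaMeasure (add_pos ha hb) hr
  have := isProbabilityMeasureBeta ha hb
  exact measurePreserving_snd.fun_comp_hasLaw (hasLaw_sum_ratio_of_indepFun ha hb hr hY hZ hYZ)

end IndependentPair

section IndependentFamily

variable {Ω ι : Type*} {mΩ : MeasurableSpace Ω} {P : Measure Ω} {X : ι → Ω → ℝ} {a : ι → ℝ} {r : ℝ}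

theorem hasLaw_finsetSum_gammaMeasure (ha : ∀ i, 0 < a i) (hr : 0 < r)
    (hX : ∀ i, HasLaw (X i) (gammaMeasure (a i) r) P) (hindep : iIndepFun X P)
    {s : Finset ι} (hs : s.Nonempty) :
    HasLaw (∑ i ∈ s, X i) (gammaMeasure (∑ i ∈ s, a i) r) P := by
  induction hs using Finset.Nonempty.cons_induction with
  | singleton i => simpa only [Finset.sum_singleton] using hX i
  | cons i s hi hs ih =>
    simp only [Finset.sum_cons]
    exact hasLaw_add_gammaMeasure (ha i) (Finset.sum_pos (fun j _ => ha j) hs) hr (hX i) ih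
      (hindep.indepFun_finsetSum_of_notMem₀ (fun j => (hX j).aemeasurable) hi).symm

theorem hasLaw_div_sum_betaMeasure [Fintype ι] [DecidableEq ι] (ha : ∀ i, 0 < a i)
    (hr : 0 < r) (hX : ∀ i, HasLaw (X i) (gammaMeasure (a i) r) P) (hindep : iIndepFun X P)
    {j : ι} (hothers : ({j}ᶜ : Finset ι).Nonempty) :
    HasLaw (fun ω => X j ω / ∑ i, X i ω) (betaMeasure (a j) (∑ i ∈ {j}ᶜ, a i)) P := by
  have hj : j ∉ ({j}ᶜ : Finset ι) := by simp
  have hratio := hasLaw_div_add_betaMeasure (ha j) (Finset.sum_pos (fun i _ => ha i) hothers) hr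
    (hX j) (hasLaw_finsetSum_gammaMeasure ha hr hX hindep hothers)
    (hindep.indepFun_finsetSum_of_notMem₀ (fun i => (hX i).aemeasurable) hj).symm
  simpa only [Finset.sum_apply, Fintype.sum_eq_add_sum_compl j] using hratio

end IndependentFamily

section Dirichlet

variable {ι : Type*} [Fintype ι] {a : ι → ℝ}

/-- The Dirichlet distribution with parameters `a`, carried by `stdSimplex ℝ ι`. It is singular to
Lebesgue measure on `ι → ℝ`, so it is encoded as the law of a normalized vector of independent
Gamma variables rather than by its density on the simplex. -/
noncomputable def dirichletMeasure (a : ι → ℝ) : Measure (ι → ℝ) :=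
  (Measure.pi fun i => gammaMeasure (a i) 1).map fun x i => x i / ∑ j, x j

theorem isProbabilityMeasure_dirichletMeasure (ha : ∀ i, 0 < a i) :
    IsProbabilityMeasure (dirichletMeasure a) := by
  have (i : ι) := isProbabilityMeasure_gammaMeasure (ha i) one_pos
  exact Measure.isProbabilityMeasure_map (by fun_prop)

theorem ae_mem_stdSimplex_dirichletMeasure [Nonempty ι] (ha : ∀ i, 0 < a i) :
    ∀ᵐ b ∂dirichletMeasure a, b ∈ stdSimplex ℝ ι := by
  have (i : ι) := isProbabilityMeasure_gammaMeasure (ha i) one_pos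
  have hpos : ∀ᵐ x ∂Measure.pi fun i => gammaMeasure (a i) 1, ∀ i, 0 < x i :=
    ae_all_iff.2 fun i => (measurePreserving_eval _ i).quasiMeasurePreserving.ae
      (ae_pos_gammaMeasure _ _)
  refine (ae_map_iff (by fun_prop) (isClosed_stdSimplex ℝ ι).measurableSet).2 ?_
  filter_upwards [hpos] with x hx
  have hsum : 0 < ∑ i, x i := Finset.sum_pos (fun i _ => hx i) Finset.univ_nonempty
  exact ⟨fun i => (div_pos (hx i) hsum).le, by rw [← Finset.sum_div, div_self hsum.ne']⟩

theorem hasLaw_eval_dirichletMeasure [DecidableEq ι] (ha : ∀ i, 0 < a i) {j : ι}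
    (hothers : ({j}ᶜ : Finset ι).Nonempty) :
    HasLaw (fun b => b j) (betaMeasure (a j) (∑ i ∈ {j}ᶜ, a i)) (dirichletMeasure a) where
  aemeasurable := (measurable_pi_apply j).aemeasurable
  map_eq := by
    have (i : ι) := isProbabilityMeasure_gammaMeasure (ha i) one_pos
    have hratio := hasLaw_div_sum_betaMeasure ha one_pos
      (fun i => (measurePreserving_eval (fun i => gammaMeasure (a i) 1) i).hasLaw)
      (iIndepFun_pi fun _ => aemeasurable_id) hothers
    rw [dirichletMeasure, Measure.map_map (by fun_prop) (by fun_prop)]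
    exact hratio.map_eq

theorem dirichletMeasure_eval_le [DecidableEq ι] (ha : ∀ i, 0 < a i) {j : ι}
    (hsum : ∑ i ∈ {j}ᶜ, a i = 1) {t : ℝ} (ht : t ∈ Set.Icc 0 1) :
    dirichletMeasure a {b | b j ≤ t} = ENNReal.ofReal (t ^ a j) := by
  have hothers : ({j}ᶜ : Finset ι).Nonempty :=
    Finset.nonempty_of_sum_ne_zero (hsum.trans_ne one_ne_zero)
  rw [(hasLaw_eval_dirichletMeasure ha hothers).measure_eq measurableSet_Iic, hsum]
  exact betaMeasure_one_right_Iic (ha j) ht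

theorem dirichletMeasure_one_div_card_sub_one_eval_le [Nontrivial ι] (j : ι) {t : ℝ}
    (ht : t ∈ Set.Icc 0 1) :
    dirichletMeasure (fun _ : ι => 1 / ((Fintype.card ι : ℝ) - 1)) {b | b j ≤ t} =
      ENNReal.ofReal (t ^ (1 / ((Fintype.card ι : ℝ) - 1))) := by
  classical
  have hcard : 0 < (Fintype.card ι : ℝ) - 1 :=
    sub_pos.2 (Nat.one_lt_cast.2 Fintype.one_lt_card)
  have hsum : ∑ _i ∈ ({j}ᶜ : Finset ι), 1 / ((Fintype.card ι : ℝ) - 1) = 1 := by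
    rw [Finset.sum_const, Finset.card_compl, Finset.card_singleton, nsmul_eq_mul,
      Nat.cast_sub Fintype.card_pos, Nat.cast_one, mul_one_div_cancel hcard.ne']
  exact dirichletMeasure_eval_le (fun _ => one_div_pos.2 hcard) hsum ht

end Dirichlet

section Groups

variable {ι κ ν : Type*} [Fintype κ]

/-- The bid sequence obtained by repeating the bids `b` on each of the groups indexed by `κ` with
scale factor `1 / |κ|`. The bijection `e` sends an object to its position inside its group,
followed by the group. -/
noncomputable def groupBids (e : ν ≃ ι × κ) (b : ι → ℝ) (x : ν) : ℝ :=
  b (e x).1 / Fintype.card κ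

@[fun_prop]
theorem measurable_groupBids (e : ν ≃ ι × κ) : Measurable (groupBids e) := by
  unfold groupBids
  fun_prop

theorem groupBids_mem_Icc [Fintype ι] (e : ν ≃ ι × κ) {b : ι → ℝ} (hb : b ∈ stdSimplex ℝ ι)
    (x : ν) : groupBids e b x ∈ Set.Icc (0 : ℝ) (1 / Fintype.card κ) := by
  obtain ⟨hnonneg, hle⟩ := mem_Icc_of_mem_stdSimplex hb (e x).1
  exact ⟨by unfold groupBids; positivity, by unfold groupBids; gcongr⟩

theorem sum_groupBids [Fintype ι] [Fintype ν] [Nonempty κ] (e : ν ≃ ι × κ) (b : ι → ℝ) :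
    ∑ x, groupBids e b x = ∑ i, b i := by
  have hκ : (Fintype.card κ : ℝ) ≠ 0 := Nat.cast_ne_zero.2 Fintype.card_ne_zero
  simp only [groupBids]
  rw [e.sum_comp fun p : ι × κ => b p.1 / (Fintype.card κ : ℝ), Fintype.sum_prod_type]
  simp only [Finset.sum_const, Finset.card_univ, nsmul_eq_mul, mul_div_cancel₀ _ hκ]

theorem groupBids_le_iff [Nonempty κ] (e : ν ≃ ι × κ) {b : ι → ℝ} {x : ν} {t : ℝ} :
    groupBids e b x ≤ t ↔ b (e x).1 ≤ Fintype.card κ * t :=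
  div_le_iff₀' (Nat.cast_pos.2 Fintype.card_pos)

end Groups

/-- For all integers `k ≥ 2` and `m ≥ 1`, with `n = k·m`, there exists a probability
measure `μ` on `ℝⁿ` such that `μ`-almost surely `bᵢ ∈ [0, k/n]` for all `i` and
`∑ bᵢ = 1`, and for each `i` and every `t ∈ [0, k/n]`,
`μ {b : bᵢ ≤ t} = ((n/k)·t)^(1/(k−1))`. -/
theorem stmt_9 (k m : ℕ) (hk : 2 ≤ k) (hm : 1 ≤ m) (n : ℕ) (hn : n = k * m) :
    ∃ μ : Measure (Fin n → ℝ), IsProbabilityMeasure μ ∧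
      (∀ᵐ b ∂μ, (∀ i, b i ∈ Set.Icc (0 : ℝ) ((k : ℝ) / n)) ∧ ∑ i, b i = 1) ∧
      (∀ i, ∀ t ∈ Set.Icc (0 : ℝ) ((k : ℝ) / n),
        μ {b | b i ≤ t} = ENNReal.ofReal (((n : ℝ) / k * t) ^ ((1 : ℝ) / ((k : ℝ) - 1)))) := by
  subst hn
  have : Nontrivial (Fin k) := Fin.nontrivial_iff_two_le.2 hk
  have : Nonempty (Fin m) := ⟨⟨0, hm⟩⟩
  have hm₀ : (0 : ℝ) < m := Nat.cast_pos.2 hm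
  have hk₁ : (0 : ℝ) < k - 1 := sub_pos.2 (Nat.one_lt_cast.2 hk)
  have hmax : (k : ℝ) / (k * m : ℕ) = 1 / m := by push_cast; field_simp
  have hscale : ((k * m : ℕ) : ℝ) / k = m := by push_cast; field_simp
  rw [hmax, hscale]
  let e : Fin (k * m) ≃ Fin k × Fin m := finProdFinEquiv.symm
  have hparam (_ : Fin k) : 0 < 1 / ((k : ℝ) - 1) := one_div_pos.2 hk₁
  have := isProbabilityMeasure_dirichletMeasure hparam
  refine ⟨(dirichletMeasure fun _ : Fin k => 1 / ((k : ℝ) - 1)).map (groupBids e),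
    Measure.isProbabilityMeasure_map (by fun_prop),
    (ae_map_iff (by fun_prop) (by measurability)).2 ?_, fun i t ht => ?_⟩
  · filter_upwards [ae_mem_stdSimplex_dirichletMeasure hparam] with b hb
    refine ⟨fun i => ?_, (sum_groupBids e b).trans hb.2⟩
    simpa only [Fintype.card_fin] using groupBids_mem_Icc e hb i
  · rw [Measure.map_apply (by fun_prop) (measurableSet_le (by fun_prop) (by fun_prop))]
    have hmt : m * t ∈ Set.Icc (0 : ℝ) 1 := ⟨mul_nonneg hm₀.le ht.1, (le_div_iff₀' hm₀).1 ht.2⟩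
    simpa [groupBids_le_iff] using dirichletMeasure_one_div_card_sub_one_eval_le (e i).1 hmt
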